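/- arXiv:1105.1586 — 7 statements merged into one kernel-verified Lean document; each statement's English description precedes it below -/
import Mathlib

section
/- For all k-connected graphs G and H each with at least n vertices, the treewidth of the cartesian product G □ H is at least k(n − 2k + 2) − 1. -/
open SimpleGraph

/-- A tree decomposition of a graph `G`: a tree together with bags of vertices
indexed by the tree, covering all edges, such that for each vertex the set of
bags containing it induces a non-empty connected subtree. -/
structure TreeDecomposition {V : Type*} (G : SimpleGraph V) where
  ι : Type
  fintype_ι : Fintype ι
  tree : SimpleGraph ι
  isTree : tree.IsTree
  bag : ι → Finset V
  covers_edge : ∀ ⦃v w : V⦄, G.Adj v w → ∃ x : ι, v ∈ bag x ∧ w ∈ bag x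
  support_connected : ∀ v : V, (tree.induce {x : ι | v ∈ bag x}).Connected

/-- The width of a tree decomposition: maximum bag size minus one. -/
noncomputable def TreeDecomposition.width {V : Type*} {G : SimpleGraph V}
    (d : TreeDecomposition G) : ℕ :=
  letI := d.fintype_ι
  (Finset.univ.sup fun x : d.ι => (d.bag x).card) - 1

/-- The treewidth of a graph: minimum width of a tree decomposition. -/
noncomputable def treewidth {V : Type*} (G : SimpleGraph V) : ℕ :=
  sInf {w : ℕ | ∃ d : TreeDecomposition G, d.width = w}

/-- A graph is `k`-connected if it has more than `k` vertices and remains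
connected after deletion of any fewer than `k` vertices. -/
def IsKConnected {V : Type*} [Fintype V] (k : ℕ) (G : SimpleGraph V) : Prop :=
  k < Fintype.card V ∧
    ∀ S : Finset V, S.card < k → ((⊤ : G.Subgraph).deleteVerts ↑S).Connected

/-- `u` and `v` are joined by a walk avoiding `S`. -/
def Av {V : Type*} (G : SimpleGraph V) (S : Set V) (u v : V) : Prop :=
  ∃ p : G.Walk u v, ∀ w ∈ p.support, w ∉ S

theorem Av.refl {V : Type*} {G : SimpleGraph V} {S : Set V} {u : V} (h : u ∉ S) : Av G S u u :=
  ⟨Walk.nil, by simpa using h⟩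

theorem Av.symm {V : Type*} {G : SimpleGraph V} {S : Set V} {u v : V} (h : Av G S u v) :
    Av G S v u := by
  obtain ⟨p, hp⟩ := h
  exact ⟨p.reverse, by simpa using hp⟩

theorem Av.trans {V : Type*} {G : SimpleGraph V} {S : Set V} {u v w : V} (h : Av G S u v)
    (h' : Av G S v w) : Av G S u w := by
  obtain ⟨p, hp⟩ := h
  obtain ⟨q, hq⟩ := h'
  refine ⟨p.append q, fun z hz => ?_⟩
  rw [Walk.mem_support_append_iff] at hz
  exact hz.elim (hp z) (hq z)

theorem Av.map {V W : Type*} {G : SimpleGraph V} {H : SimpleGraph W} (f : G →g H)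
    {S : Set V} {T : Set W} (hf : ∀ v, f v ∈ T → v ∈ S) {u v : V} (h : Av G S u v) :
    Av H T (f u) (f v) := by
  obtain ⟨p, hp⟩ := h
  refine ⟨p.map f, fun w hw => ?_⟩
  rw [Walk.support_map, List.mem_map] at hw
  obtain ⟨z, hz, rfl⟩ := hw
  exact fun h => hp z hz (hf z h)

theorem Av.of_kconn {V : Type*} [Fintype V] {k : ℕ} {G : SimpleGraph V} (hG : IsKConnected k G)
    (S : Finset V) (hS : S.card < k) {u v : V} (hu : u ∉ S) (hv : v ∉ S) :
    Av G (S : Set V) u v := by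
  have h := (hG.2 S hS).coe
  obtain ⟨p⟩ := h.preconnected ⟨u, by simpa using hu⟩ ⟨v, by simpa using hv⟩
  exact Av.map (S := ∅) (Subgraph.hom _) (fun z hz => by
    have hz' := z.2.2
    exact absurd hz hz') ⟨p, by simp⟩

/-- Bags meeting a walk that avoids the bag of `x` are joined in the tree avoiding `x`. -/
theorem av_tree {V : Type*} {G : SimpleGraph V} (d : TreeDecomposition G) (x : d.ι) {u v : V}
    (p : G.Walk u v) (hp : ∀ w ∈ p.support, w ∉ d.bag x) :
    ∀ y z, u ∈ d.bag y → v ∈ d.bag z → Av d.tree {x} y z := by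
  have key : ∀ u, u ∉ d.bag x → ∀ y z, u ∈ d.bag y → u ∈ d.bag z → Av d.tree {x} y z := by
    intro u hu y z hy hz
    obtain ⟨q⟩ := (d.support_connected u).preconnected ⟨y, hy⟩ ⟨z, hz⟩
    exact Av.map (S := ∅) (Embedding.induce _).toHom (fun t h => by
      have h' : t.1 = x := h
      have h2 : u ∈ d.bag t.1 := t.2
      rw [h'] at h2
      exact absurd h2 hu) ⟨q, by simp⟩
  induction p with
  | nil =>
    intro y z hy hz
    exact key _ (hp _ (by simp)) y z hy hz
  | cons hadj p ih =>
    intro y z hy hz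
    obtain ⟨t, h1, h2⟩ := d.covers_edge hadj
    exact (key _ (hp _ (by simp)) y t hy h1).trans
      (ih (fun w hw => hp w (by simp [hw])) t z h2 hz)

theorem no_bramble {V : Type*} {G : SimpleGraph V} (d : TreeDecomposition G)
    (B : d.ι → Set V) (hB : ∀ x, ∀ u ∈ B x, ∀ v ∈ B x, Av G (d.bag x : Set V) u v)
    (hI : ∀ x y, (B x ∩ B y).Nonempty) : False := by
  classical
  letI := d.fintype_ι
  have hf : ∀ x : d.ι, ∃ y, d.tree.Adj x y ∧
      ∀ v ∈ B x, ∀ z, v ∈ d.bag z → Av d.tree {x} y z := by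
    intro x
    obtain ⟨v, hv, -⟩ := hI x x
    obtain ⟨⟨z, hz⟩⟩ := (d.support_connected v).nonempty
    have hz' : v ∈ d.bag z := hz
    have hxz : x ≠ z := by
      rintro rfl
      obtain ⟨p, hp⟩ := hB x v hv v hv
      exact hp v (by simp) hz'
    obtain ⟨p, hp, -⟩ := d.isTree.existsUnique_path x z
    cases p with
    | nil => exact absurd rfl hxz
    | @cons _ y _ hadj q =>
      rw [Walk.cons_isPath_iff] at hp
      refine ⟨y, hadj, fun u hu t ht => ?_⟩
      have h1 : Av d.tree {x} y z := ⟨q, fun w hw h => by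
        have h' : w = x := h
        subst h'
        exact hp.2 hw⟩
      obtain ⟨r, hr⟩ := hB x v hv u hu
      exact h1.trans (av_tree d x r hr z t hz' ht)
  choose f hadj hav using hf
  have hcard := d.isTree.card_edgeFinset
  have : ∃ x ∈ (Finset.univ : Finset d.ι), ∃ y ∈ (Finset.univ : Finset d.ι), x ≠ y ∧
      s(x, f x) = s(y, f y) := by
    apply Finset.exists_ne_map_eq_of_card_lt_of_maps_to (t := d.tree.edgeFinset)
    · rw [Finset.card_univ]
      omega
    · intro x _
      simpa using hadj x
  obtain ⟨x, -, y, -, hne, he⟩ := this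
  rw [Sym2.eq_iff] at he
  rcases he with ⟨h, -⟩ | ⟨h1, h2⟩
  · exact hne h
  obtain ⟨v, hvx, hvy⟩ := hI x y
  obtain ⟨⟨z, hz⟩⟩ := (d.support_connected v).nonempty
  obtain ⟨p, hp⟩ := hav x v hvx z hz
  obtain ⟨q, hq⟩ := hav y v hvy z hz
  have hbr := isAcyclic_iff_forall_adj_isBridge.1 d.isTree.isAcyclic (hadj x)
  have hmem := isBridge_iff_forall_walk_mem_edges.1 hbr
    ((q.append p.reverse).copy h1.symm rfl)
  rw [Walk.edges_copy, Walk.edges_append, Walk.edges_reverse, List.mem_append,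
    List.mem_reverse] at hmem
  rcases hmem with hmem | hmem
  · exact hq _ (q.snd_mem_support_of_mem_edges hmem) h2
  · exact hp _ (p.fst_mem_support_of_mem_edges hmem) rfl

open Classical in
theorem good_count {γ α : Type*} [Fintype α] (g : γ → α) (S : Finset γ) (k m n : ℕ)
    (hm : n + 2 = 2 * k + m) (hS : S.card < k * m) (hn : n ≤ Fintype.card α) :
    2 * k ≤ (Finset.univ.filter fun a => (S.filter (g · = a)).card < k).card + 1 := by
  have h1 := Finset.card_filter_add_card_filter_not (s := (Finset.univ : Finset α))
    (fun a => (S.filter (g · = a)).card < k)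
  have h2 : S.card = ∑ a : α, (S.filter (g · = a)).card :=
    Finset.card_eq_sum_card_fiberwise (fun _ _ => Finset.mem_coe.2 (Finset.mem_univ _))
  have h3 : (Finset.univ.filter fun a => ¬ (S.filter (g · = a)).card < k).card * k ≤ S.card := by
    rw [h2]
    refine le_trans ?_ (Finset.sum_le_sum_of_subset (Finset.filter_subset
      (fun a => ¬ (S.filter (g · = a)).card < k) _))
    rw [← smul_eq_mul]
    apply Finset.card_nsmul_le_sum
    intro a ha
    simpa using ha
  have h4 : (Finset.univ.filter fun a => ¬ (S.filter (g · = a)).card < k).card < m := by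
    by_contra h
    have := Nat.mul_le_mul_left k (Nat.le_of_not_lt h)
    rw [Nat.mul_comm k (Finset.card _)] at this
    omega
  rw [Finset.card_univ] at h1
  omega

open Classical in
/-- If each of two fibres has fewer than `k` points, a large set avoids both. -/
theorem exists_avoid {γ β : Type*} (g : γ → β) (S T : Finset γ) (k : ℕ) (B : Finset β)
    (hB : 2 * k ≤ B.card + 1) (hS : S.card < k) (hT : T.card < k) :
    ∃ b ∈ B, (∀ s ∈ S, g s ≠ b) ∧ ∀ t ∈ T, g t ≠ b := by
  by_contra h
  push Not at h
  have : B ⊆ S.image g ∪ T.image g := by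
    intro b hb
    rw [Finset.mem_union, Finset.mem_image, Finset.mem_image]
    by_cases hs : ∃ s ∈ S, g s = b
    · exact Or.inl hs
    · push Not at hs
      exact Or.inr (h b hb hs)
  have h1 := Finset.card_le_card this
  have h2 := Finset.card_union_le (S.image g) (T.image g)
  have h3 := Finset.card_image_le (s := S) (f := g)
  have h4 := Finset.card_image_le (s := T) (f := g)
  omega

open Classical in
theorem exists_common {α β : Type*} (S T : Finset (α × β)) (k : ℕ)
    (A : Finset α) (B : Finset β) (hA : 2 * k ≤ A.card + 1) (hB : 2 * k ≤ B.card + 1)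
    (hk : 1 ≤ k)
    (hS : ∀ a ∈ A, (S.filter (·.1 = a)).card < k) (hT : ∀ b ∈ B, (T.filter (·.2 = b)).card < k) :
    ∃ a ∈ A, ∃ b ∈ B, (a, b) ∉ S ∧ (a, b) ∉ T := by
  by_contra h
  push Not at h
  have hsub : A ×ˢ B ⊆ (A.biUnion fun a => S.filter (·.1 = a)) ∪
      (B.biUnion fun b => T.filter (·.2 = b)) := by
    rintro ⟨a, b⟩ hab
    rw [Finset.mem_product] at hab
    by_cases hs : (a, b) ∈ S
    · simp [hs, hab.1]
    · simp [h a hab.1 b hab.2 hs, hab.2]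
  have h1 := Finset.card_le_card hsub
  have h2 := Finset.card_union_le (A.biUnion fun a => S.filter (·.1 = a))
    (B.biUnion fun b => T.filter (·.2 = b))
  have h3 := Finset.card_biUnion_le_card_mul A (fun a => S.filter (·.1 = a)) (k - 1)
    (fun a ha => by have := hS a ha; omega)
  have h4 := Finset.card_biUnion_le_card_mul B (fun b => T.filter (·.2 = b)) (k - 1)
    (fun a ha => by have := hT a ha; omega)
  rw [Finset.card_product] at h1
  obtain ⟨j, rfl⟩ : ∃ j, k = j + 1 := ⟨k - 1, by omega⟩
  simp only [Nat.add_sub_cancel] at h3 h4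
  have h5 : 2 * j + 1 ≤ A.card := by omega
  have h6 : 2 * j + 1 ≤ B.card := by omega
  nlinarith

open Classical in
/-- The bramble element avoiding `S`. -/
def brk {α β : Type} (k : ℕ) (S : Finset (α × β)) : Set (α × β) :=
  {p | p ∉ S ∧ ((S.filter (·.1 = p.1)).card < k ∨ (S.filter (·.2 = p.2)).card < k)}

open Classical in
theorem av_col {α β : Type} [Fintype α] [Fintype β] {k : ℕ}
    (G : SimpleGraph α) {H : SimpleGraph β} (hH : IsKConnected k H)
    (S : Finset (α × β)) {a : α} (ha : (S.filter (·.1 = a)).card < k) {b b' : β}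
    (h : (a, b) ∉ S) (h' : (a, b') ∉ S) : Av (G □ H) (S : Set (α × β)) (a, b) (a, b') := by
  have := Av.of_kconn hH ((S.filter (·.1 = a)).image Prod.snd)
    (lt_of_le_of_lt Finset.card_image_le ha) (u := b) (v := b')
    (by simpa using h) (by simpa using h')
  exact this.map (G.boxProdRight H a).toHom (fun v hv => by
    have hv' : (a, v) ∈ S := hv
    simpa using hv')

open Classical in
theorem av_row {α β : Type} [Fintype α] [Fintype β] {k : ℕ}
    {G : SimpleGraph α} (H : SimpleGraph β) (hG : IsKConnected k G)
    (S : Finset (α × β)) {b : β} (hb : (S.filter (·.2 = b)).card < k) {a a' : α}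
    (h : (a, b) ∉ S) (h' : (a', b) ∉ S) : Av (G □ H) (S : Set (α × β)) (a, b) (a', b) := by
  have := Av.of_kconn hG ((S.filter (·.2 = b)).image Prod.fst)
    (lt_of_le_of_lt Finset.card_image_le hb) (u := a) (v := a')
    (by simpa using h) (by simpa using h')
  exact this.map (G.boxProdLeft H b).toHom (fun v hv => by
    have hv' : (v, b) ∈ S := hv
    simpa using hv')

open Classical in
theorem brk_av {α β : Type} [Fintype α] [Fintype β] {k m n : ℕ}
    {G : SimpleGraph α} {H : SimpleGraph β} (hG : IsKConnected k G) (hH : IsKConnected k H)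
    (hm : n + 2 = 2 * k + m) (hk : 1 ≤ k)
    (hGn : n ≤ Fintype.card α) (hHn : n ≤ Fintype.card β)
    (S : Finset (α × β)) (hS : S.card < k * m) :
    ∀ u ∈ brk k S, ∀ v ∈ brk k S, Av (G □ H) (S : Set (α × β)) u v := by
  have hA := good_count (Prod.fst : α × β → α) S k m n hm hS hGn
  have hB := good_count (Prod.snd : α × β → β) S k m n hm hS hHn
  have hcol : ∀ u ∈ brk k S, ∃ a b, (S.filter (·.1 = a)).card < k ∧ (a, b) ∉ S ∧
      Av (G □ H) (S : Set (α × β)) u (a, b) := by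
    rintro ⟨a, b⟩ ⟨hu, hc | hr⟩
    · exact ⟨a, b, hc, hu, Av.refl hu⟩
    · obtain ⟨a', ha', h1, -⟩ := exists_avoid Prod.fst (S.filter (·.2 = b)) ∅ k _ hA hr
        (by rw [Finset.card_empty]; omega)
      have h2 : (a', b) ∉ S := fun h => h1 (a', b) (by simpa using h) rfl
      exact ⟨a', b, (Finset.mem_filter.1 ha').2, h2, av_row H hG S hr hu h2⟩
  intro u hu v hv
  obtain ⟨a, b, h1, h2, h3⟩ := hcol u hu
  obtain ⟨a', b', h1', h2', h3'⟩ := hcol v hv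
  obtain ⟨r, hr, h4, h5⟩ := exists_avoid Prod.snd (S.filter (·.1 = a)) (S.filter (·.1 = a'))
    k _ hB h1 h1'
  have h4' : (a, r) ∉ S := fun h => h4 (a, r) (by simpa using h) rfl
  have h5' : (a', r) ∉ S := fun h => h5 (a', r) (by simpa using h) rfl
  exact h3.trans ((av_col G hH S h1 h2 h4').trans
    ((av_row H hG S (Finset.mem_filter.1 hr).2 h4' h5').trans
      ((av_col G hH S h1' h5' h2').trans h3'.symm)))

theorem exists_decomp {V : Type*} [Fintype V] (G : SimpleGraph V) :
    Nonempty (TreeDecomposition G) :=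
  ⟨{ ι := Unit
     fintype_ι := inferInstance
     tree := ⊥
     isTree := IsTree.of_subsingleton
     bag := fun _ => Finset.univ
     covers_edge := fun v w _ => ⟨(), by simp, by simp⟩
     support_connected := fun v => by
       haveI : Nonempty {x : Unit | v ∈ (Finset.univ : Finset V)} := ⟨⟨(), by simp⟩⟩
       exact ⟨fun a b => by rw [Subsingleton.elim a b]⟩ }⟩

/-- **Treewidth of cartesian products of highly connected graphs.**
For all `k`-connected graphs `G` and `H` each with at least `n` vertices, the
treewidth of the cartesian product `G □ H` is at least `k * (n - 2 * k + 2) - 1`. -/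
theorem treewidth_boxProd_ge {α β : Type} [Fintype α] [Fintype β] (k n : ℕ)
    (G : SimpleGraph α) (H : SimpleGraph β)
    (hG : IsKConnected k G) (hH : IsKConnected k H)
    (hGn : n ≤ Fintype.card α) (hHn : n ≤ Fintype.card β) :
    (k : ℤ) * ((n : ℤ) - 2 * (k : ℤ) + 2) - 1 ≤ (treewidth (G □ H) : ℤ) := by
  classical
  rcases Nat.eq_zero_or_pos k with rfl | hk
  · simp
  rcases Nat.lt_or_ge (n + 2) (2 * k) with hlt | hge
  · have : (k : ℤ) * ((n : ℤ) - 2 * (k : ℤ) + 2) ≤ 0 :=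
      mul_nonpos_of_nonneg_of_nonpos (by omega) (by omega)
    omega
  obtain ⟨m, hm⟩ := Nat.exists_eq_add_of_le hge
  have hmz : (n : ℤ) - 2 * (k : ℤ) + 2 = m := by omega
  rw [hmz]
  suffices h : k * m ≤ treewidth (G □ H) + 1 by
    have : ((k * m : ℕ) : ℤ) ≤ ((treewidth (G □ H) + 1 : ℕ) : ℤ) := by exact_mod_cast h
    push_cast at this
    omega
  have hne : {w : ℕ | ∃ d : TreeDecomposition (G □ H), d.width = w}.Nonempty := by
    obtain ⟨d⟩ := exists_decomp (G □ H)
    exact ⟨_, d, rfl⟩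
  obtain ⟨d, hd⟩ := Nat.sInf_mem hne
  have hd' : d.width = treewidth (G □ H) := hd
  rw [← hd']
  by_contra hcon
  push Not at hcon
  have hbag : ∀ x, (d.bag x).card < k * m := by
    intro x
    letI := d.fintype_ι
    have h1 : (d.bag x).card ≤ Finset.univ.sup fun x : d.ι => (d.bag x).card :=
      Finset.le_sup (f := fun x : d.ι => (d.bag x).card) (Finset.mem_univ x)
    have h2 : d.width = (Finset.univ.sup fun x : d.ι => (d.bag x).card) - 1 := rfl
    omega
  refine no_bramble d (fun x => brk k (d.bag x))
    (fun x => brk_av hG hH hm hk hGn hHn _ (hbag x)) (fun x y => ?_)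
  have hA := good_count (Prod.fst : α × β → α) (d.bag x) k m n hm (hbag x) hGn
  have hB := good_count (Prod.snd : α × β → β) (d.bag y) k m n hm (hbag y) hHn
  obtain ⟨a, ha, b, hb, h1, h2⟩ := exists_common (d.bag x) (d.bag y) k _ _ hA hB hk
    (fun a ha => (Finset.mem_filter.1 ha).2) (fun b hb => (Finset.mem_filter.1 hb).2)
  exact ⟨(a, b), ⟨h1, Or.inl (Finset.mem_filter.1 ha).2⟩, ⟨h2, Or.inr (Finset.mem_filter.1 hb).2⟩⟩
end

section
/- Let G and H be k-connected graphs each with at least n ≥ 2k − 1 vertices. Then the cartesian product G □ H contains a bramble of order at least k(n − 2k + 2). -/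
open SimpleGraph

/-- Two subgraphs touch if they share a vertex or there is an edge between them. -/
def Touch {V : Type*} {G : SimpleGraph V} (X Y : G.Subgraph) : Prop :=
  (X.verts ∩ Y.verts).Nonempty ∨ ∃ v ∈ X.verts, ∃ w ∈ Y.verts, G.Adj v w

/-- A bramble: a set of pairwise touching connected subgraphs. -/
def IsBramble {V : Type*} {G : SimpleGraph V} (B : Set G.Subgraph) : Prop :=
  (∀ X ∈ B, X.Connected) ∧ ∀ X ∈ B, ∀ Y ∈ B, Touch X Y

/-- A hitting set of a bramble: a set of vertices meeting every element. -/
def IsHittingSet {V : Type*} {G : SimpleGraph V} (B : Set G.Subgraph) (S : Set V) : Prop :=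
  ∀ X ∈ B, (S ∩ X.verts).Nonempty

/-- The order of a bramble: the minimum size of a hitting set. -/
noncomputable def brambleOrder {V : Type*} {G : SimpleGraph V} (B : Set G.Subgraph) : ℕ :=
  sInf {m : ℕ | ∃ S : Finset V, IsHittingSet B ↑S ∧ S.card = m}

open Finset in
lemma aux_good {γ ι : Type} [Fintype ι] [DecidableEq ι] (f : γ → ι) (S : Finset γ) (k n : ℕ)
    (hk : 0 < k) (hn : 2 * k ≤ n + 1) (hι : n ≤ Fintype.card ι) (hS : S.card < k * (n + 2 - 2 * k)) :
    ∃ A : Finset ι, A.card = 2 * k - 1 ∧ ∀ a ∈ A, (S.filter (fun p => f p = a)).card < k := by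
  classical
  set good := (univ : Finset ι).filter (fun a => (S.filter (fun p => f p = a)).card < k) with hg
  suffices h : 2 * k - 1 ≤ good.card by
    obtain ⟨A, hA, hc⟩ := exists_subset_card_eq h
    exact ⟨A, hc, fun a ha => (mem_filter.1 (hA ha)).2⟩
  have h1 : goodᶜ.card * k ≤ S.card := by
    calc goodᶜ.card * k ≤ ∑ a ∈ goodᶜ, (S.filter (fun p => f p = a)).card := by
          rw [← smul_eq_mul]
          apply card_nsmul_le_sum
          intro a ha
          simpa [hg] using ha
      _ ≤ ∑ a, (S.filter (fun p => f p = a)).card :=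
          sum_le_sum_of_subset (subset_univ _)
      _ = S.card := (card_eq_sum_card_fiberwise (fun _ _ => by simp)).symm
  have h2 : goodᶜ.card < n + 2 - 2 * k := by
    by_contra! h
    have := Nat.mul_le_mul_left k h
    rw [mul_comm k (goodᶜ.card)] at this
    omega
  have := card_add_card_compl good
  omega

section
variable {α β : Type} [Fintype α] [Fintype β] [DecidableEq α] [DecidableEq β]

lemma aux_col (k : ℕ) (G : SimpleGraph α) (H : SimpleGraph β) (hG : IsKConnected k G)
    (S : Finset (α × β)) (U : Set (α × β)) (x : β)
    (hx : (S.filter (fun p => p.2 = x)).card < k) (hU : ∀ v, (v, x) ∉ S → (v, x) ∈ U)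
    (v w : α) (hv : (v, x) ∉ S) (hw : (w, x) ∉ S) :
    ((⊤ : (G □ H).Subgraph).induce U).coe.Reachable ⟨(v, x), hU v hv⟩ ⟨(w, x), hU w hw⟩ := by
  set F := (S.filter (fun p => p.2 = x)).image Prod.fst
  have hF : ∀ u, u ∉ F ↔ (u, x) ∉ S := by
    intro u; simp [F]
  have hc := hG.2 F (lt_of_le_of_lt Finset.card_image_le hx)
  let φ : ((⊤ : G.Subgraph).deleteVerts ↑F).coe →g ((⊤ : (G □ H).Subgraph).induce U).coe :=
    { toFun := fun u => ⟨(u.1, x), hU _ ((hF _).1 (by simpa using u.2))⟩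
      map_rel' := by
        rintro ⟨a, ha⟩ ⟨b, hb⟩ h
        have h3 : G.Adj a b := Subgraph.coe_adj_sub _ _ _ h
        have ha' := hU a ((hF a).1 (by simpa using ha))
        have hb' := hU b ((hF b).1 (by simpa using hb))
        simp [ha', hb', h3] }
  exact (hc.coe.preconnected ⟨v, by simpa using (hF v).2 hv⟩ ⟨w, by simpa using (hF w).2 hw⟩).map φ

lemma aux_row (k : ℕ) (G : SimpleGraph α) (H : SimpleGraph β) (hH : IsKConnected k H)
    (S : Finset (α × β)) (U : Set (α × β)) (x : α)
    (hx : (S.filter (fun p => p.1 = x)).card < k) (hU : ∀ v, (x, v) ∉ S → (x, v) ∈ U)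
    (v w : β) (hv : (x, v) ∉ S) (hw : (x, w) ∉ S) :
    ((⊤ : (G □ H).Subgraph).induce U).coe.Reachable ⟨(x, v), hU v hv⟩ ⟨(x, w), hU w hw⟩ := by
  set F := (S.filter (fun p => p.1 = x)).image Prod.snd
  have hF : ∀ u, u ∉ F ↔ (x, u) ∉ S := by
    intro u; simp [F]
  have hc := hH.2 F (lt_of_le_of_lt Finset.card_image_le hx)
  let φ : ((⊤ : H.Subgraph).deleteVerts ↑F).coe →g ((⊤ : (G □ H).Subgraph).induce U).coe :=
    { toFun := fun u => ⟨(x, u.1), hU _ ((hF _).1 (by simpa using u.2))⟩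
      map_rel' := by
        rintro ⟨a, ha⟩ ⟨b, hb⟩ h
        have h3 : H.Adj a b := Subgraph.coe_adj_sub _ _ _ h
        have ha' := hU a ((hF a).1 (by simpa using ha))
        have hb' := hU b ((hF b).1 (by simpa using hb))
        simp [ha', hb', h3] }
  exact (hc.coe.preconnected ⟨v, by simpa using (hF v).2 hv⟩ ⟨w, by simpa using (hF w).2 hw⟩).map φ

lemma aux_common (k : ℕ) (hk : 0 < k) (S : Finset (α × β)) (A : Finset α)
    (hA : A.card = 2 * k - 1) (x y : β)
    (hx : (S.filter (fun p => p.2 = x)).card < k) (hy : (S.filter (fun p => p.2 = y)).card < k) :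
    ∃ v ∈ A, (v, x) ∉ S ∧ (v, y) ∉ S := by
  by_contra! h
  have hsub : A ⊆ (S.filter (fun p => p.2 = x)).image Prod.fst ∪
      (S.filter (fun p => p.2 = y)).image Prod.fst := by
    intro v hv
    have := h v hv
    simp
    tauto
  have h1 := Finset.card_le_card hsub
  have h2 := Finset.card_union_le ((S.filter (fun p => p.2 = x)).image Prod.fst)
    ((S.filter (fun p => p.2 = y)).image Prod.fst)
  have h3 : ((S.filter (fun p => p.2 = x)).image Prod.fst).card ≤ _ := Finset.card_image_le
  have h4 : ((S.filter (fun p => p.2 = y)).image Prod.fst).card ≤ _ := Finset.card_image_le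
  omega

lemma aux_one (k : ℕ) (hk : 0 < k) (S : Finset (α × β)) (X : Finset β)
    (hX : X.card = 2 * k - 1) (v : α)
    (hv : (S.filter (fun p => p.1 = v)).card < k) :
    ∃ x ∈ X, (v, x) ∉ S := by
  by_contra! h
  have hsub : X ⊆ (S.filter (fun p => p.1 = v)).image Prod.snd := by
    intro x hx
    simpa using h x hx
  have h1 := Finset.card_le_card hsub
  have h3 : ((S.filter (fun p => p.1 = v)).image Prod.snd).card ≤ _ := Finset.card_image_le
  omega

/-- The vertices outside `S` in rows of `A` or columns of `X`. -/
def crossSet (S : Finset (α × β)) (A : Finset α) (X : Finset β) : Set (α × β) :=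
  {p | p ∉ S ∧ (p.1 ∈ A ∨ p.2 ∈ X)}

lemma aux_conn (k : ℕ) (hk : 0 < k) (G : SimpleGraph α) (H : SimpleGraph β)
    (hG : IsKConnected k G) (hH : IsKConnected k H)
    (S : Finset (α × β)) (A : Finset α) (X : Finset β)
    (hA : A.card = 2 * k - 1) (hX : X.card = 2 * k - 1)
    (hA' : ∀ v ∈ A, (S.filter (fun p => p.1 = v)).card < k)
    (hX' : ∀ x ∈ X, (S.filter (fun p => p.2 = x)).card < k) :
    ((⊤ : (G □ H).Subgraph).induce (crossSet S A X)).Connected := by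
  have hUc : ∀ x ∈ X, ∀ v, (v, x) ∉ S → (v, x) ∈ crossSet S A X := fun x hx v h => ⟨h, Or.inr hx⟩
  have hUr : ∀ v ∈ A, ∀ x, (v, x) ∉ S → (v, x) ∈ crossSet S A X := fun x hx v h => ⟨h, Or.inl hx⟩
  obtain ⟨x₀, hx₀⟩ : X.Nonempty := Finset.card_pos.1 (by omega)
  obtain ⟨v₀, hv₀, h₀, -⟩ := aux_common k hk S A hA x₀ x₀ (hX' _ hx₀) (hX' _ hx₀)
  have hcol : ∀ (v : α) (x : β) (hx : x ∈ X) (h : (v, x) ∉ S),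
      ((⊤ : (G □ H).Subgraph).induce (crossSet S A X)).coe.Reachable
        ⟨(v, x), hUc x hx v h⟩ ⟨(v₀, x₀), hUc x₀ hx₀ v₀ h₀⟩ := by
    intro v x hx h
    obtain ⟨w, hw, h1, h2⟩ := aux_common k hk S A hA x x₀ (hX' _ hx) (hX' _ hx₀)
    exact ((aux_col k G H hG S _ x (hX' x hx) (hUc x hx) v w h h1).trans
      (aux_row k G H hH S _ w (hA' w hw) (hUr w hw) x x₀ h1 h2)).trans
      (aux_col k G H hG S _ x₀ (hX' x₀ hx₀) (hUc x₀ hx₀) w v₀ h2 h₀)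
  have hall : ∀ p : ((⊤ : (G □ H).Subgraph).induce (crossSet S A X)).verts,
      ((⊤ : (G □ H).Subgraph).induce (crossSet S A X)).coe.Reachable p
        ⟨(v₀, x₀), hUc x₀ hx₀ v₀ h₀⟩ := by
    rintro ⟨⟨v, x⟩, hS, hv | hx⟩
    · obtain ⟨y, hy, h1⟩ := aux_one k hk S X hX v (hA' v hv)
      exact (aux_row k G H hH S _ v (hA' v hv) (hUr v hv) x y hS h1).trans (hcol v y hy h1)
    · exact hcol v x hx hS
  rw [Subgraph.connected_iff]
  exact ⟨⟨fun p q => (hall p).trans (hall q).symm⟩, ⟨(v₀, x₀), hUc x₀ hx₀ v₀ h₀⟩⟩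

lemma aux_touch (k : ℕ) (hk : 0 < k) (S T : Finset (α × β)) (A : Finset α) (X : Finset β)
    (hA : A.card = 2 * k - 1) (hX : X.card = 2 * k - 1)
    (hA' : ∀ v ∈ A, (S.filter (fun p => p.1 = v)).card < k)
    (hX' : ∀ x ∈ X, (T.filter (fun p => p.2 = x)).card < k) :
    ∃ v ∈ A, ∃ x ∈ X, (v, x) ∉ S ∧ (v, x) ∉ T := by
  by_contra! h
  set P := S.filter (fun p => p.1 ∈ A)
  set Q := T.filter (fun p => p.2 ∈ X)
  have hsub : A ×ˢ X ⊆ P ∪ Q := by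
    rintro ⟨v, x⟩ hp
    rw [Finset.mem_product] at hp
    have := h v hp.1 x hp.2
    simp only [P, Q, Finset.mem_union, Finset.mem_filter]
    tauto
  have hP : P.card ≤ (k - 1) * A.card := by
    apply Finset.card_le_mul_card_image_of_maps_to (f := Prod.fst)
    · intro p hp; exact (Finset.mem_filter.1 hp).2
    · intro v hv
      have := hA' v hv
      have h2 : (P.filter (fun p => p.1 = v)).card ≤ (S.filter (fun p => p.1 = v)).card :=
        Finset.card_le_card (Finset.filter_subset_filter _ (Finset.filter_subset _ _))
      omega
  have hQ : Q.card ≤ (k - 1) * X.card := by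
    apply Finset.card_le_mul_card_image_of_maps_to (f := Prod.snd)
    · intro p hp; exact (Finset.mem_filter.1 hp).2
    · intro v hv
      have := hX' v hv
      have h2 : (Q.filter (fun p => p.2 = v)).card ≤ (T.filter (fun p => p.2 = v)).card :=
        Finset.card_le_card (Finset.filter_subset_filter _ (Finset.filter_subset _ _))
      omega
  have h1 := (Finset.card_le_card hsub).trans (Finset.card_union_le _ _)
  rw [Finset.card_product, hA, hX] at h1
  rw [hA] at hP
  rw [hX] at hQ
  obtain ⟨m, rfl⟩ : ∃ m, k = m + 1 := ⟨k - 1, by omega⟩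
  have e : 2 * (m + 1) - 1 = 2 * m + 1 := by omega
  rw [e] at h1 hP hQ
  simp only [Nat.add_sub_cancel] at hP hQ
  nlinarith

end

/-- Let `G` and `H` be `k`-connected graphs each with at least `n ≥ 2k - 1` vertices.
Then `G □ H` contains a bramble of order at least `k * (n - 2 * k + 2)`. -/
theorem exists_bramble_boxProd {α β : Type} [Fintype α] [Fintype β] (k n : ℕ)
    (G : SimpleGraph α) (H : SimpleGraph β)
    (hG : IsKConnected k G) (hH : IsKConnected k H)
    (hn : 2 * k ≤ n + 1)
    (hGn : n ≤ Fintype.card α) (hHn : n ≤ Fintype.card β) :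
    ∃ B : Set (G □ H).Subgraph, IsBramble B ∧ k * (n + 2 - 2 * k) ≤ brambleOrder B := by
  classical
  rcases Nat.eq_zero_or_pos k with rfl | hk
  · exact ⟨∅, ⟨by simp, by simp⟩, by simp⟩
  let B : Set (G □ H).Subgraph := {K | ∃ (S : Finset (α × β)) (A : Finset α) (X : Finset β),
    A.card = 2 * k - 1 ∧ X.card = 2 * k - 1 ∧
    (∀ v ∈ A, (S.filter (fun p => p.1 = v)).card < k) ∧
    (∀ x ∈ X, (S.filter (fun p => p.2 = x)).card < k) ∧
    K = (⊤ : (G □ H).Subgraph).induce (crossSet S A X)}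
  have hconn : ∀ K ∈ B, K.Connected := by
    rintro K ⟨S, A, X, hA, hX, hA', hX', rfl⟩
    exact aux_conn k hk G H hG hH S A X hA hX hA' hX'
  refine ⟨B, ⟨hconn, ?_⟩, ?_⟩
  · rintro K ⟨S, A, X, hA, hX, hA', hX', rfl⟩ L ⟨T, C, Y, hC, hY, hC', hY', rfl⟩
    obtain ⟨v, hv, x, hx, h1, h2⟩ := aux_touch k hk S T A Y hA hY hA' hY'
    exact Or.inl ⟨(v, x), ⟨h1, Or.inl hv⟩, ⟨h2, Or.inr hx⟩⟩
  · unfold brambleOrder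
    apply le_csInf
    · refine ⟨_, Finset.univ, ?_, rfl⟩
      intro K hK
      obtain ⟨p, hp⟩ := (hconn K hK).nonempty
      exact ⟨p, by simp, hp⟩
    · rintro m ⟨S, hS, rfl⟩
      by_contra! hlt
      obtain ⟨A, hA, hA'⟩ := aux_good (Prod.fst : α × β → α) S k n hk hn hGn hlt
      obtain ⟨X, hX, hX'⟩ := aux_good (Prod.snd : α × β → β) S k n hk hn hHn hlt
      obtain ⟨p, hp, hq⟩ := hS _ ⟨S, A, X, hA, hX, hA', hX', rfl⟩
      exact hq.1 hp
end

section
/- Let G and H be k-connected graphs. For each vertex v of G let H_v denote the v-copy of H in G □ H, and for each vertex w of H let G_w denote the w-copy of G. Let S be a set of 2k − 1 vertices of G and T a set of 2k − 1 vertices of H. Let X be a subgraph of G □ H obtained from the union of ∪{H_v : v ∈ S} and ∪{G_w : w ∈ T} by deleting vertices so that at most k − 1 vertices are deleted from H_v for each v ∈ S, and at most k − 1 vertices are deleted from G_w for each w ∈ T. Then X is connected. -/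
open SimpleGraph

/-- The `v`-copy of `H` in `G □ H`: the subgraph induced on `{(v, w) : w ∈ V(H)}`. -/
def copyH {α : Type*} {β : Type*} (G : SimpleGraph α) (H : SimpleGraph β) (v : α) :
    (G □ H).Subgraph :=
  (⊤ : (G □ H).Subgraph).induce {p : α × β | p.1 = v}

/-- The `w`-copy of `G` in `G □ H`: the subgraph induced on `{(v, w) : v ∈ V(G)}`. -/
def copyG {α : Type*} {β : Type*} (G : SimpleGraph α) (H : SimpleGraph β) (w : β) :
    (G □ H).Subgraph :=
  (⊤ : (G □ H).Subgraph).induce {p : α × β | p.2 = w}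

/-- The subgraph of `G □ H` obtained from the union of the copies `H_v` (`v ∈ S`)
and `G_w` (`w ∈ T`) by deleting the vertices in `D`. -/
def brambleElt {α : Type*} {β : Type*} (G : SimpleGraph α) (H : SimpleGraph β)
    (S : Set α) (T : Set β) (D : Set (α × β)) : (G □ H).Subgraph :=
  ((⨆ v ∈ S, copyH G H v) ⊔ ⨆ w ∈ T, copyG G H w).deleteVerts D

lemma brambleElt_mem {α β : Type} (G : SimpleGraph α) (H : SimpleGraph β)
    (S : Set α) (T : Set β) (D : Set (α × β)) (p : α × β) :
    p ∈ (brambleElt G H S T D).verts ↔ (p.1 ∈ S ∨ p.2 ∈ T) ∧ p ∉ D := by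
  simp [brambleElt, copyH, copyG, Subgraph.verts_iSup]

lemma brambleElt_adj {α β : Type} (G : SimpleGraph α) (H : SimpleGraph β)
    (S : Set α) (T : Set β) (D : Set (α × β)) (p q : α × β) (hp : p ∉ D) (hq : q ∉ D)
    (hadj : (G □ H).Adj p q)
    (h : (p.1 ∈ S ∧ q.1 = p.1) ∨ (p.2 ∈ T ∧ q.2 = p.2)) :
    (brambleElt G H S T D).Adj p q := by
  have hp' : p ∈ (brambleElt G H S T D).verts := by
    rw [brambleElt_mem]; exact ⟨h.imp And.left And.left, hp⟩
  have hq' : q ∈ (brambleElt G H S T D).verts := by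
    rw [brambleElt_mem]; refine ⟨h.imp ?_ ?_, hq⟩ <;> (rintro ⟨a, b⟩; rwa [b])
  unfold brambleElt at hp' hq' ⊢
  rw [Subgraph.deleteVerts_adj]
  refine ⟨hp'.1, hp, hq'.1, hq, ?_⟩
  rw [Subgraph.sup_adj]
  rcases h with ⟨a, b⟩ | ⟨a, b⟩
  · left
    simp only [Subgraph.iSup_adj]
    exact ⟨p.1, a, rfl, b, hadj⟩
  · right
    simp only [Subgraph.iSup_adj]
    exact ⟨p.2, a, rfl, b, hadj⟩

/-- Mapping a `k`-connected graph minus few vertices into a subgraph. -/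
lemma reach_of_kconn {V W : Type} [Fintype V] {k : ℕ} {K : SimpleGraph V}
    (hK : IsKConnected k K) {L : SimpleGraph W} (X : L.Subgraph) (f : V → W)
    (B : Finset V) (hB : B.card < k)
    (hv : ∀ x, x ∉ B → f x ∈ X.verts)
    (ha : ∀ x y, x ∉ B → y ∉ B → K.Adj x y → X.Adj (f x) (f y))
    (x y : V) (hx : x ∉ B) (hy : y ∉ B)
    (hfx : f x ∈ X.verts) (hfy : f y ∈ X.verts) :
    X.coe.Reachable ⟨f x, hfx⟩ ⟨f y, hfy⟩ := by
  have hc := (hK.2 B hB).coe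
  have hm : ∀ z, z ∈ ((⊤ : K.Subgraph).deleteVerts (↑B : Set V)).verts ↔ z ∉ B := by
    intro z; simp
  let φ : ((⊤ : K.Subgraph).deleteVerts (↑B : Set V)).coe →g X.coe :=
    { toFun := fun z => ⟨f z.1, hv z.1 ((hm _).1 z.2)⟩
      map_rel' := by
        rintro ⟨a, ha'⟩ ⟨b, hb'⟩ hab
        refine ha a b ((hm _).1 ha') ((hm _).1 hb') ?_
        rw [Subgraph.coe_adj] at hab
        exact Subgraph.adj_sub _ hab }
  exact (hc.preconnected ⟨x, (hm _).2 hx⟩ ⟨y, (hm _).2 hy⟩).map φ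

theorem brambleElt_connected {α β : Type} [Fintype α] [Fintype β] (k : ℕ)
    (G : SimpleGraph α) (H : SimpleGraph β)
    (hG : IsKConnected k G) (hH : IsKConnected k H)
    (S : Finset α) (T : Finset β)
    (hS : S.card + 1 = 2 * k) (hT : T.card + 1 = 2 * k)
    (D : Set (α × β))
    (hDS : ∀ v ∈ S, (D ∩ {p : α × β | p.1 = v}).ncard ≤ k - 1)
    (hDT : ∀ w ∈ T, (D ∩ {p : α × β | p.2 = w}).ncard ≤ k - 1) :
    (brambleElt G H ↑S ↑T D).Connected := by
  classical
  have hk : 0 < k := by omega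
  set X := brambleElt G H (↑S) (↑T) D with hX
  have hmem : ∀ p : α × β, p ∈ X.verts ↔ (p.1 ∈ S ∨ p.2 ∈ T) ∧ p ∉ D := by
    intro p; simpa using brambleElt_mem G H (↑S) (↑T) D p
  have hBS : ∀ v ∈ S, (Finset.univ.filter fun w : β => (v, w) ∈ D).card < k := by
    intro v hv
    have h1 := hDS v hv
    have h2 : (Finset.univ.filter fun w : β => (v, w) ∈ D).card
        ≤ (D ∩ {p : α × β | p.1 = v}).ncard := by
      rw [← Set.ncard_coe_finset]
      refine Set.ncard_le_ncard_of_injOn (fun w => (v, w)) ?_ ?_ (Set.toFinite _)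
      · intro w hw; simpa using hw
      · intro a _ b _ h; simpa using h
    omega
  have hBT : ∀ w ∈ T, (Finset.univ.filter fun v : α => (v, w) ∈ D).card < k := by
    intro w hw
    have h1 := hDT w hw
    have h2 : (Finset.univ.filter fun v : α => (v, w) ∈ D).card
        ≤ (D ∩ {p : α × β | p.2 = w}).ncard := by
      rw [← Set.ncard_coe_finset]
      refine Set.ncard_le_ncard_of_injOn (fun v => (v, w)) ?_ ?_ (Set.toFinite _)
      · intro v hv; simpa using hv
      · intro a _ b _ h; simpa using h
    omega
  have L1 : ∀ v ∈ S, ∀ x y, ∀ (hx : (v, x) ∈ X.verts) (hy : (v, y) ∈ X.verts),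
      X.coe.Reachable ⟨(v, x), hx⟩ ⟨(v, y), hy⟩ := by
    intro v hv x y hx hy
    refine reach_of_kconn hH X (fun w => (v, w)) _ (hBS v hv) ?_ ?_ x y ?_ ?_ hx hy
    · intro z hz; rw [hmem]; exact ⟨Or.inl hv, by simpa using hz⟩
    · intro a b ha hb hab
      exact brambleElt_adj G H _ _ D _ _ (by simpa using ha) (by simpa using hb)
        (by simpa [boxProd_adj] using hab) (Or.inl ⟨hv, rfl⟩)
    · simpa using ((hmem _).1 hx).2
    · simpa using ((hmem _).1 hy).2
  have L2 : ∀ w ∈ T, ∀ x y, ∀ (hx : (x, w) ∈ X.verts) (hy : (y, w) ∈ X.verts),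
      X.coe.Reachable ⟨(x, w), hx⟩ ⟨(y, w), hy⟩ := by
    intro w hw x y hx hy
    refine reach_of_kconn hG X (fun v => (v, w)) _ (hBT w hw) ?_ ?_ x y ?_ ?_ hx hy
    · intro z hz; rw [hmem]; exact ⟨Or.inr hw, by simpa using hz⟩
    · intro a b ha hb hab
      exact brambleElt_adj G H _ _ D _ _ (by simpa using ha) (by simpa using hb)
        (by simpa [boxProd_adj] using hab) (Or.inr ⟨hw, rfl⟩)
    · simpa using ((hmem _).1 hx).2
    · simpa using ((hmem _).1 hy).2
  have C1 : ∀ v ∈ S, ∀ v' ∈ S, ∃ t ∈ T, (v, t) ∉ D ∧ (v', t) ∉ D := by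
    intro v hv v' hv'
    by_contra! hcon
    have hsub : T ⊆ (Finset.univ.filter fun w : β => (v, w) ∈ D) ∪
        (Finset.univ.filter fun w : β => (v', w) ∈ D) := by
      intro t ht
      by_cases h : (v, t) ∈ D
      · simp [h]
      · simp [hcon t ht h]
    have h1 := (Finset.card_le_card hsub).trans (Finset.card_union_le _ _)
    have := hBS v hv
    have := hBS v' hv'
    omega
  have C2 : ∀ w ∈ T, ∃ v ∈ S, (v, w) ∉ D := by
    intro w hw
    by_contra! hcon
    have hsub : S ⊆ Finset.univ.filter fun v : α => (v, w) ∈ D := by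
      intro t ht
      simp [hcon t ht]
    have h1 := Finset.card_le_card hsub
    have := hBT w hw
    omega
  have A : ∀ p : X.verts, ∃ v ∈ S, ∃ w, ∃ h : (v, w) ∈ X.verts,
      X.coe.Reachable p ⟨(v, w), h⟩ := by
    rintro ⟨⟨a, b⟩, hp⟩
    rcases ((hmem _).1 hp).1 with h | h
    · exact ⟨a, h, b, hp, Reachable.refl _⟩
    · obtain ⟨v, hv, hvD⟩ := C2 b h
      have hvb : (v, b) ∈ X.verts := (hmem _).2 ⟨Or.inl hv, hvD⟩
      exact ⟨v, hv, b, hvb, L2 b h a v hp hvb⟩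
  have hpre : X.coe.Preconnected := by
    intro p q
    obtain ⟨v, hv, w, h, hr⟩ := A p
    obtain ⟨v', hv', w', h', hr'⟩ := A q
    obtain ⟨t, ht, ht1, ht2⟩ := C1 v hv v' hv'
    have m1 : (v, t) ∈ X.verts := (hmem _).2 ⟨Or.inl hv, ht1⟩
    have m2 : (v', t) ∈ X.verts := (hmem _).2 ⟨Or.inl hv', ht2⟩
    exact hr.trans ((L1 v hv w t h m1).trans ((L2 t ht v v' m1 m2).trans
      ((L1 v' hv' t w' m2 h').trans hr'.symm)))
  obtain ⟨v, hv⟩ : S.Nonempty := by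
    rw [← Finset.card_pos]; omega
  obtain ⟨t, ht, ht1, -⟩ := C1 v hv v hv
  rw [Subgraph.connected_iff]
  exact ⟨⟨hpre⟩, ⟨(v, t), (hmem _).2 ⟨Or.inl hv, ht1⟩⟩⟩
end

section
/- Let G and H be k-connected graphs each with at least n ≥ 2k − 1 vertices, and let B be the bramble in G □ H consisting of all subgraphs X obtained as follows: choose a set S of 2k − 1 vertices of G and a set T of 2k − 1 vertices of H, take the union of the copies H_v for v ∈ S and G_w for w ∈ T, and delete vertices so that at most k − 1 vertices are deleted from each H_v (v ∈ S) and at most k − 1 vertices are deleted from each G_w (w ∈ T). Then every hitting set of B has size at least k(n − 2k + 2). -/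
open SimpleGraph

/-- If `J` has fewer than `k * (n - 2k + 2)` elements, then at least `2k - 1` of the
fibers of `f` meet `J` in at most `k - 1` elements. -/
lemma exists_light_fibers {γ δ : Type} [Fintype δ] (k n : ℕ) (hk : 0 < k)
    (hn : 2 * k ≤ n + 1) (hd : n ≤ Fintype.card δ) (J : Finset γ) (f : γ → δ)
    (hlt : J.card < k * (n + 2 - 2 * k)) :
    ∃ S : Finset δ, S.card + 1 = 2 * k ∧
      ∀ v ∈ S, ((↑J : Set γ) ∩ {p | f p = v}).ncard ≤ k - 1 := by
  classical
  let A : Finset δ := Finset.univ.filter fun v => k ≤ (J.filter fun p => f p = v).card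
  have h1 : A.card * k ≤ J.card := by
    calc A.card * k ≤ ∑ v ∈ A, (J.filter fun p => f p = v).card := by
          rw [← smul_eq_mul]
          exact Finset.card_nsmul_le_sum _ _ _ fun v hv => (Finset.mem_filter.1 hv).2
      _ ≤ ∑ v, (J.filter fun p => f p = v).card :=
          Finset.sum_le_sum_of_subset (Finset.subset_univ _)
      _ = J.card := (Finset.card_eq_sum_card_fiberwise fun _ _ => Finset.mem_univ _).symm
  have h2 : A.card < n + 2 - 2 * k := by
    refine lt_of_mul_lt_mul_left (a := k) ?_ (Nat.zero_le k)
    rw [mul_comm]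
    exact lt_of_le_of_lt h1 hlt
  have h3 : 2 * k - 1 ≤ Aᶜ.card := by
    rw [Finset.card_compl]
    omega
  obtain ⟨S, hSA, hS⟩ := Finset.exists_subset_card_eq h3
  refine ⟨S, by omega, fun v hv => ?_⟩
  have h4 : ¬ k ≤ (J.filter fun p => f p = v).card := by
    simpa [A] using Finset.mem_compl.1 (hSA hv)
  have h5 : ((↑J : Set γ) ∩ {p | f p = v}) = ↑(J.filter fun p => f p = v) := by
    ext p
    simp
  rw [h5, Set.ncard_coe_finset]
  omega

/-- Let `G` and `H` be `k`-connected graphs each with at least `n ≥ 2k - 1`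
vertices, and let `B` be the bramble in `G □ H` consisting of all subgraphs
obtained from a union of copies `H_v` (`v ∈ S`, `|S| = 2k - 1`) and `G_w`
(`w ∈ T`, `|T| = 2k - 1`) by deleting at most `k - 1` vertices from each copy.
Then every hitting set of `B` has size at least `k * (n - 2 * k + 2)`. -/
theorem hittingSet_card_ge {α β : Type} [Fintype α] [Fintype β] (k n : ℕ)
    (G : SimpleGraph α) (H : SimpleGraph β)
    (hG : IsKConnected k G) (hH : IsKConnected k H)
    (hn : 2 * k ≤ n + 1)
    (hGn : n ≤ Fintype.card α) (hHn : n ≤ Fintype.card β)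
    (B : Set (G □ H).Subgraph)
    (hB : B = {X : (G □ H).Subgraph |
      ∃ (S : Finset α) (T : Finset β) (D : Set (α × β)),
        S.card + 1 = 2 * k ∧ T.card + 1 = 2 * k ∧
        (∀ v ∈ S, (D ∩ {p : α × β | p.1 = v}).ncard ≤ k - 1) ∧
        (∀ w ∈ T, (D ∩ {p : α × β | p.2 = w}).ncard ≤ k - 1) ∧
        X = brambleElt G H ↑S ↑T D})
    (J : Finset (α × β)) (hJ : IsHittingSet B ↑J) :
    k * (n + 2 - 2 * k) ≤ J.card := by
  classical
  rcases Nat.eq_zero_or_pos k with rfl | hk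
  · simp
  by_contra hlt
  rw [not_le] at hlt
  obtain ⟨S, hS, hS'⟩ := exists_light_fibers k n hk hn hGn J Prod.fst hlt
  obtain ⟨T, hT, hT'⟩ := exists_light_fibers k n hk hn hHn J Prod.snd hlt
  obtain ⟨p, hp, hp'⟩ := hJ (brambleElt G H ↑S ↑T ↑J) (by
    rw [hB]
    exact ⟨S, T, ↑J, hS, hT, hS', hT', rfl⟩)
  rw [brambleElt, Subgraph.deleteVerts_verts] at hp'
  exact hp'.2 hp
end

section
/- Let C_n be the cycle on n vertices, n ≥ 3. Then the treewidth of the toroidal grid C_n □ C_n is at least 2n − 5. -/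
open SimpleGraph

/-- The graph `G` with only the edges inside `A`. -/
def restrictTo {V : Type*} (G : SimpleGraph V) (A : Set V) : SimpleGraph V where
  Adj a b := G.Adj a b ∧ a ∈ A ∧ b ∈ A
  symm := ⟨fun _ _ h => ⟨h.1.symm, h.2.2, h.2.1⟩⟩
  loopless := ⟨fun _ h => G.loopless.irrefl _ h.1⟩

lemma bag_reach {V : Type*} {G : SimpleGraph V} (d : TreeDecomposition G) (x : d.ι)
    {a : V} (ha : a ∉ d.bag x) {p q : d.ι} (hp : a ∈ d.bag p) (hq : a ∈ d.bag q) :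
    (restrictTo d.tree {x}ᶜ).Reachable p q := by
  have h := (d.support_connected a).preconnected ⟨p, hp⟩ ⟨q, hq⟩
  let f : (d.tree.induce {x : d.ι | a ∈ d.bag x}) →g (restrictTo d.tree {x}ᶜ) :=
    { toFun := fun y => y.1
      map_rel' := by
        rintro ⟨u, hu⟩ ⟨v, hv⟩ huv
        refine ⟨huv, ?_, ?_⟩
        · rintro rfl; exact ha hu
        · rintro rfl; exact ha hv }
  exact h.map f

lemma set_reach {V : Type*} {G : SimpleGraph V} (d : TreeDecomposition G) (x : d.ι)
    {A : Set V} (hA : ∀ a ∈ A, a ∉ d.bag x) {a b : V} (haA : a ∈ A)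
    (hab : (restrictTo G A).Reachable a b)
    {p q : d.ι} (hp : a ∈ d.bag p) (hq : b ∈ d.bag q) :
    (restrictTo d.tree {x}ᶜ).Reachable p q := by
  obtain ⟨w⟩ := hab
  induction w generalizing p with
  | nil => exact bag_reach d x (hA _ haA) hp hq
  | cons h w ih =>
    obtain ⟨y, hy1, hy2⟩ := d.covers_edge h.1
    exact (bag_reach d x (hA _ haA) hp hy1).trans (ih h.2.2 hy2 hq)

lemma exists_step {ι : Type*} {T : SimpleGraph ι} (hT : T.Connected) {x w : ι} (hxw : x ≠ w) :
    ∃ y, T.Adj x y ∧ (restrictTo T {x}ᶜ).Reachable y w := by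
  classical
  obtain ⟨p, hp⟩ := (hT.preconnected x w).exists_isPath
  cases p with
  | nil => exact absurd rfl hxw
  | cons h q =>
    rename_i y
    refine ⟨y, h, ?_⟩
    rw [Walk.cons_isPath_iff] at hp
    have hq := hp.2
    clear hq
    have key : ∀ {u v : ι} (q : T.Walk u v), x ∉ q.support →
        (restrictTo T {x}ᶜ).Reachable u v := by
      intro u v q
      induction q with
      | nil => intro _; exact Reachable.refl _
      | cons h q ih =>
        intro hx
        rw [Walk.support_cons, List.mem_cons, not_or] at hx
        refine Reachable.trans (Adj.reachable ?_) (ih hx.2)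
        refine ⟨h, fun e => hx.1 e.symm, fun e => ?_⟩
        apply hx.2
        rw [← Set.mem_singleton_iff.1 e]
        exact q.start_mem_support
    exact key q hp.2

lemma bramble_false {V : Type*} {G : SimpleGraph V} (d : TreeDecomposition G)
    (β : d.ι → Set V)
    (hconn : ∀ x, ∀ a ∈ β x, ∀ b ∈ β x, (restrictTo G (β x)).Reachable a b)
    (hdisj : ∀ x, ∀ a ∈ β x, a ∉ d.bag x)
    (hint : ∀ x y, (β x ∩ β y).Nonempty) : False := by
  classical
  letI := d.fintype_ι
  have hstep : ∀ x, ∃ y, d.tree.Adj x y ∧ ∀ a ∈ β x, ∀ q, a ∈ d.bag q →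
      (restrictTo d.tree {x}ᶜ).Reachable y q := by
    intro x
    obtain ⟨a, ha, -⟩ := hint x x
    obtain ⟨⟨w, hw⟩⟩ := (d.support_connected a).nonempty
    have hxw : x ≠ w := by
      rintro rfl
      exact hdisj _ a ha hw
    obtain ⟨y, hy, hr⟩ := exists_step d.isTree.connected hxw
    exact ⟨y, hy, fun b hb q hq => hr.trans (set_reach d x (hdisj x) ha (hconn x a ha b hb) hw hq)⟩
  choose f hf hfr using hstep
  have hcard := d.isTree.card_edgeFinset
  obtain ⟨x, -, y, -, hxy, he⟩ := Finset.exists_ne_map_eq_of_card_lt_of_maps_to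
    (s := (Finset.univ : Finset d.ι)) (t := d.tree.edgeFinset) (f := fun x => s(x, f x))
    (by rw [Finset.card_univ]; omega) (by intro x _; simpa using hf x)
  have h2 : f x = y ∧ f y = x := by
    rcases Sym2.eq_iff.1 he with h | h
    · exact absurd h.1 hxy
    · exact ⟨h.2, h.1.symm⟩
  obtain ⟨z, hzx, hzy⟩ := hint x y
  obtain ⟨⟨w, hw⟩⟩ := (d.support_connected z).nonempty
  have r1 := hfr x z hzx w hw
  have r2 := hfr y z hzy w hw
  rw [h2.1] at r1
  rw [h2.2] at r2
  have hadj : d.tree.Adj x y := h2.1 ▸ hf x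
  have hb := (isAcyclic_iff_forall_adj_isBridge.1 d.isTree.isAcyclic) hadj
  rw [isBridge_iff] at hb
  have m1 : restrictTo d.tree {x}ᶜ ≤ d.tree.deleteEdges {s(x, y)} := by
    intro u v h
    rw [deleteEdges_adj]
    refine ⟨h.1, fun e => ?_⟩
    rcases Sym2.eq_iff.1 (Set.mem_singleton_iff.1 e) with e | e
    · exact h.2.1 e.1
    · exact h.2.2 e.2
  have m2 : restrictTo d.tree {y}ᶜ ≤ d.tree.deleteEdges {s(x, y)} := by
    intro u v h
    rw [deleteEdges_adj]
    refine ⟨h.1, fun e => ?_⟩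
    rcases Sym2.eq_iff.1 (Set.mem_singleton_iff.1 e) with e | e
    · exact h.2.2 e.2
    · exact h.2.1 e.1
  have := (r2.mono m2).trans (r1.mono m1).symm
  exact hb this

open scoped Fin.CommRing in
lemma cycle_reach_aux {n : ℕ} (s : Fin (n + 3)) (k : ℕ) (hk : k + 1 < n + 3) :
    (restrictTo (cycleGraph (n + 3)) {s}ᶜ).Reachable (s + 1) (s + 1 + (k : Fin (n + 3))) := by
  have hne : ∀ j : ℕ, j + 1 < n + 3 → s + 1 + (j : Fin (n + 3)) ≠ s := by
    intro j hj h
    have h1 : ((j + 1 : ℕ) : Fin (n + 3)) = 0 := by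
      push_cast
      have : s + (1 + (j : Fin (n + 3))) = s + 0 := by rw [← add_assoc, h, add_zero]
      exact (add_comm _ _).trans (add_left_cancel this)
    have h2 := congrArg Fin.val h1
    rw [Fin.val_natCast, Nat.mod_eq_of_lt hj] at h2
    simp at h2
  induction k with
  | zero => simp
  | succ k ih =>
    refine (ih (by omega)).trans (Adj.reachable ⟨?_, hne k (by omega), hne (k + 1) hk⟩)
    rw [cycleGraph_adj]
    right
    push_cast
    abel

open scoped Fin.CommRing in
lemma cycle_reach {n : ℕ} (s a b : Fin (n + 3)) (ha : a ≠ s) (hb : b ≠ s) :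
    (restrictTo (cycleGraph (n + 3)) {s}ᶜ).Reachable a b := by
  have key : ∀ a : Fin (n + 3), a ≠ s →
      (restrictTo (cycleGraph (n + 3)) {s}ᶜ).Reachable (s + 1) a := by
    intro a ha
    have hlt : (a - s - 1).val + 1 < n + 3 := by
      by_contra hcon
      have h1 : (a - s - 1).val + 1 = n + 3 := by
        have := (a - s - 1).isLt
        omega
      have h2 : (((a - s - 1).val + 1 : ℕ) : Fin (n + 3)) = 0 := by
        rw [h1]; exact Fin.natCast_self _
      push_cast at h2
      rw [sub_add_cancel, sub_eq_zero] at h2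
      exact ha h2
    have := cycle_reach_aux s _ hlt
    rw [Fin.cast_val_eq_self] at this
    convert this using 1
    abel
  exact (key a ha).symm.trans (key b hb)

/-- A line meeting the set `B` at most once is connected off `B`. -/
lemma line_reach {n : ℕ} (B : Finset (Fin (n + 3))) (hB : B.card ≤ 1) (a b : Fin (n + 3))
    (ha : a ∉ B) (hb : b ∉ B) :
    (restrictTo (cycleGraph (n + 3)) {x | x ∉ B}).Reachable a b := by
  have hs : ∃ s, a ≠ s ∧ b ≠ s ∧ B ⊆ {s} := by
    rcases Finset.card_le_one_iff_subset_singleton.1 hB with ⟨s, hs⟩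
    rcases B.eq_empty_or_nonempty with h | ⟨t, ht⟩
    · have : ∃ s, s ∉ ({a, b} : Finset (Fin (n + 3))) := by
        by_contra! hcon
        have h1 : (Finset.univ : Finset (Fin (n + 3))) ⊆ {a, b} := fun x _ => hcon x
        have h2 := Finset.card_le_card h1
        have h3 := Finset.card_le_two (a := a) (b := b)
        simp at h2
        omega
      obtain ⟨s, hs⟩ := this
      simp only [Finset.mem_insert, Finset.mem_singleton, not_or] at hs
      exact ⟨s, fun e => hs.1 e.symm, fun e => hs.2 e.symm, by simp [h]⟩
    · have : t = s := by simpa using hs ht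
      subst this
      exact ⟨t, fun e => ha (e ▸ ht), fun e => hb (e ▸ ht), hs⟩
  obtain ⟨s, h1, h2, h3⟩ := hs
  refine (cycle_reach s a b h1 h2).mono ?_
  intro u v h
  refine ⟨h.1, fun e => h.2.1 ?_, fun e => h.2.2 ?_⟩
  · simpa using h3 e
  · simpa using h3 e

section torus
variable {n : ℕ}

/-- positions of `S` in a row -/
def rowSet (S : Finset (Fin (n + 3) × Fin (n + 3))) (i : Fin (n + 3)) : Finset (Fin (n + 3)) :=
  Finset.univ.filter fun j => (i, j) ∈ S

/-- positions of `S` in a column -/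
def colSet (S : Finset (Fin (n + 3) × Fin (n + 3))) (j : Fin (n + 3)) : Finset (Fin (n + 3)) :=
  Finset.univ.filter fun i => (i, j) ∈ S

/-- rows meeting `S` at most once -/
def goodRows (S : Finset (Fin (n + 3) × Fin (n + 3))) : Finset (Fin (n + 3)) :=
  Finset.univ.filter fun i => (rowSet S i).card ≤ 1

/-- columns meeting `S` at most once -/
def goodCols (S : Finset (Fin (n + 3) × Fin (n + 3))) : Finset (Fin (n + 3)) :=
  Finset.univ.filter fun i => (colSet S i).card ≤ 1

/-- the bramble element avoiding `S` -/
def bigSet (S : Finset (Fin (n + 3) × Fin (n + 3))) : Set (Fin (n + 3) × Fin (n + 3)) :=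
  {v | v ∉ S ∧ (v.1 ∈ goodRows S ∨ v.2 ∈ goodCols S)}

lemma count_aux (g : Fin (n + 3) → ℕ) (h : ∑ i, g i ≤ 2 * (n + 3) - 5) :
    3 ≤ (Finset.univ.filter fun i => g i ≤ 1).card := by
  have h1 := Finset.card_filter_add_card_filter_not (s := (Finset.univ : Finset (Fin (n + 3))))
    (fun i => g i ≤ 1)
  have h2 : (Finset.univ.filter fun i => ¬ g i ≤ 1).card * 2 ≤ ∑ i, g i := by
    calc _ ≤ ∑ i ∈ Finset.univ.filter (fun i => ¬ g i ≤ 1), g i := by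
          rw [← smul_eq_mul]
          apply Finset.card_nsmul_le_sum
          intro x hx
          have := (Finset.mem_filter.1 hx).2
          omega
      _ ≤ _ := Finset.sum_le_sum_of_subset (Finset.filter_subset _ _)
  rw [Finset.card_univ, Fintype.card_fin] at h1
  omega

lemma goodRows_card (S : Finset (Fin (n + 3) × Fin (n + 3))) (hS : S.card ≤ 2 * (n + 3) - 5) :
    3 ≤ (goodRows S).card := by
  apply count_aux
  refine le_trans (le_of_eq ?_) hS
  rw [Finset.card_eq_sum_card_fiberwise (f := Prod.fst) (t := Finset.univ) (by intro x _; simp)]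
  refine Finset.sum_congr rfl fun i _ => ?_
  refine Finset.card_bij (fun j _ => (i, j)) ?_ ?_ ?_
  · intro j hj; simpa [rowSet] using hj
  · intro a _ b _ h; exact (Prod.mk.inj h).2
  · rintro ⟨a, b⟩ h
    simp only [Finset.mem_filter] at h
    obtain ⟨h, rfl⟩ := h
    exact ⟨b, by simpa [rowSet] using h, rfl⟩

lemma goodCols_card (S : Finset (Fin (n + 3) × Fin (n + 3))) (hS : S.card ≤ 2 * (n + 3) - 5) :
    3 ≤ (goodCols S).card := by
  apply count_aux
  refine le_trans (le_of_eq ?_) hS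
  rw [Finset.card_eq_sum_card_fiberwise (f := Prod.snd) (t := Finset.univ) (by intro x _; simp)]
  refine Finset.sum_congr rfl fun i _ => ?_
  refine Finset.card_bij (fun j _ => (j, i)) ?_ ?_ ?_
  · intro j hj; simpa [colSet] using hj
  · intro a _ b _ h; exact (Prod.mk.inj h).1
  · rintro ⟨a, b⟩ h
    simp only [Finset.mem_filter] at h
    obtain ⟨h, rfl⟩ := h
    exact ⟨a, by simpa [colSet] using h, rfl⟩

lemma avoid_two (C A B : Finset (Fin (n + 3))) (hC : 3 ≤ C.card) (hA : A.card ≤ 1)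
    (hB : B.card ≤ 1) : ∃ c ∈ C, c ∉ A ∧ c ∉ B := by
  by_contra! hcon
  have h1 : C ⊆ A ∪ B := by
    intro c hc
    by_cases h : c ∈ A
    · exact Finset.mem_union_left _ h
    · exact Finset.mem_union_right _ (hcon c hc h)
  have := Finset.card_le_card h1
  have := Finset.card_union_le A B
  omega

lemma row_conn (S : Finset (Fin (n + 3) × Fin (n + 3))) {i j j' : Fin (n + 3)}
    (hi : i ∈ goodRows S) (h : (i, j) ∉ S) (h' : (i, j') ∉ S) :
    (restrictTo (cycleGraph (n + 3) □ cycleGraph (n + 3)) (bigSet S)).Reachable (i, j) (i, j') := by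
  have hr := line_reach (rowSet S i) (Finset.mem_filter.1 hi).2 j j'
    (by simpa [rowSet] using h) (by simpa [rowSet] using h')
  let f : restrictTo (cycleGraph (n + 3)) {x | x ∉ rowSet S i} →g
      restrictTo (cycleGraph (n + 3) □ cycleGraph (n + 3)) (bigSet S) :=
    { toFun := fun j => (i, j)
      map_rel' := by
        intro a b hab
        refine ⟨boxProd_adj.2 (Or.inr ⟨hab.1, rfl⟩), ⟨?_, Or.inl hi⟩, ⟨?_, Or.inl hi⟩⟩
        · simpa [rowSet] using hab.2.1
        · simpa [rowSet] using hab.2.2 }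
  exact hr.map f

lemma col_conn (S : Finset (Fin (n + 3) × Fin (n + 3))) {i i' j : Fin (n + 3)}
    (hj : j ∈ goodCols S) (h : (i, j) ∉ S) (h' : (i', j) ∉ S) :
    (restrictTo (cycleGraph (n + 3) □ cycleGraph (n + 3)) (bigSet S)).Reachable (i, j) (i', j) := by
  have hr := line_reach (colSet S j) (Finset.mem_filter.1 hj).2 i i'
    (by simpa [colSet] using h) (by simpa [colSet] using h')
  let f : restrictTo (cycleGraph (n + 3)) {x | x ∉ colSet S j} →g
      restrictTo (cycleGraph (n + 3) □ cycleGraph (n + 3)) (bigSet S) :=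
    { toFun := fun i => (i, j)
      map_rel' := by
        intro a b hab
        refine ⟨boxProd_adj.2 (Or.inl ⟨hab.1, rfl⟩), ⟨?_, Or.inr hj⟩, ⟨?_, Or.inr hj⟩⟩
        · simpa [colSet] using hab.2.1
        · simpa [colSet] using hab.2.2 }
  exact hr.map f

lemma bigSet_conn (S : Finset (Fin (n + 3) × Fin (n + 3))) (hS : S.card ≤ 2 * (n + 3) - 5)
    (v : Fin (n + 3) × Fin (n + 3)) (hv : v ∈ bigSet S)
    (w : Fin (n + 3) × Fin (n + 3)) (hw : w ∈ bigSet S) :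
    (restrictTo (cycleGraph (n + 3) □ cycleGraph (n + 3)) (bigSet S)).Reachable v w := by
  have toRow : ∀ v ∈ bigSet S, ∃ u : Fin (n + 3) × Fin (n + 3), u ∉ S ∧ u.1 ∈ goodRows S ∧
      (restrictTo (cycleGraph (n + 3) □ cycleGraph (n + 3)) (bigSet S)).Reachable v u := by
    rintro ⟨i, j⟩ ⟨h1, h2 | h2⟩
    · exact ⟨_, h1, h2, Reachable.refl _⟩
    · have hj := (Finset.mem_filter.1 h2).2
      obtain ⟨r, hr, hr1, -⟩ := avoid_two _ _ _ (goodRows_card S hS) hj hj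
      have hr2 : (r, j) ∉ S := by simpa [colSet] using hr1
      exact ⟨(r, j), hr2, hr, col_conn S h2 h1 hr2⟩
  obtain ⟨⟨i, j⟩, h1, h2, h3⟩ := toRow v hv
  obtain ⟨⟨i', j'⟩, h1', h2', h3'⟩ := toRow w hw
  obtain ⟨c, hc, hc1, hc2⟩ := avoid_two _ _ _ (goodCols_card S hS)
    (Finset.mem_filter.1 h2).2 (Finset.mem_filter.1 h2').2
  have e1 : (i, c) ∉ S := by simpa [rowSet] using hc1
  have e2 : (i', c) ∉ S := by simpa [rowSet] using hc2
  exact h3.trans ((row_conn S h2 h1 e1).trans ((col_conn S hc e1 e2).trans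
    ((row_conn S h2' e2 h1').trans h3'.symm)))

lemma bigSet_inter (S S' : Finset (Fin (n + 3) × Fin (n + 3))) (hS : S.card ≤ 2 * (n + 3) - 5)
    (hS' : S'.card ≤ 2 * (n + 3) - 5) : (bigSet S ∩ bigSet S').Nonempty := by
  by_contra hcon
  have hR := goodRows_card S hS
  have hC := goodCols_card S' hS'
  have hsub : goodRows S ×ˢ goodCols S' ⊆
      ((goodRows S).biUnion fun i => (rowSet S i).image fun j => (i, j)) ∪
      ((goodCols S').biUnion fun j => (colSet S' j).image fun i => (i, j)) := by
    rintro ⟨i, j⟩ h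
    rw [Finset.mem_product] at h
    by_cases h1 : (i, j) ∈ S
    · apply Finset.mem_union_left
      rw [Finset.mem_biUnion]
      exact ⟨i, h.1, Finset.mem_image.2 ⟨j, by simpa [rowSet] using h1, rfl⟩⟩
    · by_cases h2 : (i, j) ∈ S'
      · apply Finset.mem_union_right
        rw [Finset.mem_biUnion]
        exact ⟨j, h.2, Finset.mem_image.2 ⟨i, by simpa [colSet] using h2, rfl⟩⟩
      · exact absurd ⟨(i, j), ⟨h1, Or.inl h.1⟩, ⟨h2, Or.inr h.2⟩⟩ hcon
  have h0 := (Finset.card_le_card hsub).trans (Finset.card_union_le _ _)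
  have h1 := Finset.card_biUnion_le_card_mul (goodRows S)
    (fun i => (rowSet S i).image fun j => (i, j)) 1
    (fun i hi => Finset.card_image_le.trans (Finset.mem_filter.1 hi).2)
  have h2 := Finset.card_biUnion_le_card_mul (goodCols S')
    (fun j => (colSet S' j).image fun i => (i, j)) 1
    (fun i hi => Finset.card_image_le.trans (Finset.mem_filter.1 hi).2)
  rw [Finset.card_product] at h0
  nlinarith

end torus

/-- The one-bag decomposition. -/
def trivialDecomposition {V : Type*} [Fintype V] (G : SimpleGraph V) : TreeDecomposition G where
  ι := Unit
  fintype_ι := inferInstance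
  tree := ⊥
  isTree := IsTree.of_subsingleton
  bag := fun _ => Finset.univ
  covers_edge := fun _ _ _ => ⟨(), Finset.mem_univ _, Finset.mem_univ _⟩
  support_connected := fun v =>
    haveI : Nonempty {x : Unit | v ∈ (Finset.univ : Finset V)} := ⟨⟨(), Finset.mem_univ _⟩⟩
    { preconnected := fun a b => by rw [Subsingleton.elim a b] }

/-- The treewidth of the toroidal grid `C_n □ C_n` is at least `2 * n - 5`. -/
theorem treewidth_cycle_boxProd_ge (n : ℕ) (hn : 3 ≤ n) :
    2 * n - 5 ≤ treewidth (cycleGraph n □ cycleGraph n) := by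
  obtain ⟨m, rfl⟩ : ∃ m, n = m + 3 := ⟨n - 3, by omega⟩
  unfold treewidth
  refine le_csInf ⟨_, trivialDecomposition _, rfl⟩ ?_
  rintro w ⟨d, rfl⟩
  by_contra hlt
  have hbag : ∀ x : d.ι, (d.bag x).card ≤ 2 * (m + 3) - 5 := by
    intro x
    letI := d.fintype_ι
    have h1 : (d.bag x).card ≤ Finset.univ.sup fun x : d.ι => (d.bag x).card :=
      Finset.le_sup (f := fun x : d.ι => (d.bag x).card) (Finset.mem_univ x)
    unfold TreeDecomposition.width at hlt
    omega
  exact bramble_false d (fun x => bigSet (d.bag x))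
    (fun x => bigSet_conn _ (hbag x)) (fun x a ha => ha.1)
    (fun x y => bigSet_inter _ _ (hbag x) (hbag y))
end

section
/- Let C_n be the cycle on n vertices, n ≥ 3. Then the treewidth of the toroidal grid C_n □ C_n is at most 2n. -/
open SimpleGraph

theorem pathGraph_isTree_aux (m : ℕ) : (pathGraph (m + 1)).IsTree := by
  refine ⟨pathGraph_connected m, ?_⟩
  rw [isAcyclic_iff_forall_adj_isBridge]
  intro u v huv
  rw [isBridge_iff]
  rintro ⟨p⟩
  have key : ∀ {x y : Fin (m + 1)}
      (_ : ((pathGraph (m + 1)).deleteEdges {s(u, v)}).Walk x y),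
      (x.val ≤ min u.val v.val ↔ y.val ≤ min u.val v.val) := by
    intro x y q
    induction q with
    | nil => exact Iff.rfl
    | cons h _ ih =>
      rw [← ih]
      rw [deleteEdges_adj, pathGraph_adj] at h
      rw [pathGraph_adj] at huv
      obtain ⟨h1, h2⟩ := h
      simp only [Set.mem_singleton_iff, Sym2.eq_iff, Fin.ext_iff] at h2
      omega
  have := key p
  rw [pathGraph_adj] at huv
  omega

theorem pathGraph_induce_connected_aux (m : ℕ) (S : Set (Fin m)) (t : Fin m) (ht : t ∈ S)
    (hS : ∀ x ∈ S, ∀ y : Fin m, (x ≤ y ∧ y ≤ t) ∨ (t ≤ y ∧ y ≤ x) → y ∈ S) :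
    ((pathGraph m).induce S).Connected := by
  have key : ∀ d : ℕ, ∀ x : Fin m, ∀ hx : x ∈ S, (t.val - x.val) + (x.val - t.val) = d →
      ((pathGraph m).induce S).Reachable ⟨x, hx⟩ ⟨t, ht⟩ := by
    intro d
    induction d with
    | zero =>
      intro x hx h
      have : x = t := Fin.ext (by omega)
      subst this
      exact Reachable.refl _
    | succ d ih =>
      intro x hx h
      have hxl := x.isLt
      have htl := t.isLt
      by_cases hlt : x.val < t.val
      · have hy : (⟨x.val + 1, by omega⟩ : Fin m) ∈ S :=
          hS x hx _ (Or.inl (by simp only [Fin.le_def]; omega))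
        refine Reachable.trans (Adj.reachable ?_) (ih _ hy (by simp only; omega))
        simp [pathGraph_adj]
      · have hy : (⟨x.val - 1, by omega⟩ : Fin m) ∈ S :=
          hS x hx _ (Or.inr (by simp only [Fin.le_def]; omega))
        refine Reachable.trans (Adj.reachable ?_) (ih _ hy (by simp only; omega))
        simp only [comap_adj, Function.Embedding.subtype_apply, pathGraph_adj]
        omega
  haveI : Nonempty S := ⟨⟨t, ht⟩⟩
  exact ⟨fun x y => (key _ x.1 x.2 rfl).trans (key _ y.1 y.2 rfl).symm⟩

/-- Lexicographic index of a vertex of the torus. -/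
def torusIdx {n : ℕ} (v : Fin n × Fin n) : ℕ := v.1.val * n + v.2.val

theorem torusIdx_injective {n : ℕ} : Function.Injective (torusIdx (n := n)) := by
  rintro ⟨a, b⟩ ⟨c, d⟩ h
  simp only [torusIdx] at h
  have hb := b.isLt
  have hd := d.isLt
  have hn : 0 < n := by omega
  have h1 : a.val = c.val := by
    have := congrArg (· / n) h
    simpa [Nat.mul_comm _ n, Nat.mul_add_div hn, Nat.div_eq_of_lt hb, Nat.div_eq_of_lt hd] using this
  rw [h1] at h
  exact Prod.ext (Fin.ext h1) (Fin.ext (by simpa using h))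

theorem torusIdx_lt {n : ℕ} (v : Fin n × Fin n) : torusIdx v < n * n := by
  have h1 := v.1.isLt
  have h2 := v.2.isLt
  have : (v.1.val + 1) * n ≤ n * n := Nat.mul_le_mul_right _ h1
  rw [Nat.add_mul] at this
  simp only [torusIdx]
  omega

theorem cycle_adj_cases {n : ℕ} {a b : Fin n} (h : (cycleGraph n).Adj a b) :
    a.val + 1 = b.val ∨ b.val + 1 = a.val ∨ a.val = 0 ∨ b.val = 0 := by
  rw [cycleGraph_adj'] at h
  have ha := a.isLt
  have hb := b.isLt
  rcases le_total a b with hab | hab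
  · have := Fin.le_def.1 hab
    have h2 := Fin.sub_val_of_le hab
    rcases h with h | h
    · rcases eq_or_lt_of_le hab with e | e
      · subst e; omega
      · rw [Fin.coe_sub_iff_lt.2 e] at h
        omega
    · omega
  · have := Fin.le_def.1 hab
    have h2 := Fin.sub_val_of_le hab
    rcases h with h | h
    · omega
    · rcases eq_or_lt_of_le hab with e | e
      · subst e; omega
      · rw [Fin.coe_sub_iff_lt.2 e] at h
        omega

theorem torus_adj_cases {n : ℕ} {v w : Fin n × Fin n}
    (h : (cycleGraph n □ cycleGraph n).Adj v w) :
    torusIdx v < n ∨ torusIdx w < n ∨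
      (torusIdx v ≤ torusIdx w + n ∧ torusIdx w ≤ torusIdx v + n) := by
  obtain ⟨a, b⟩ := v
  obtain ⟨c, d⟩ := w
  rw [boxProd_adj] at h
  simp only [torusIdx] at *
  have hb := b.isLt
  have hd := d.isLt
  rcases h with ⟨h, e⟩ | ⟨h, e⟩
  · subst e
    rcases cycle_adj_cases h with h | h | h | h
    · rw [← h, Nat.add_mul]; omega
    · rw [← h, Nat.add_mul]; omega
    · rw [h]; omega
    · rw [h]; omega
  · subst e
    omega

/-- The bags of the path decomposition: the first row plus a sliding window. -/
def torusBag (n : ℕ) (k : ℕ) : Finset (Fin n × Fin n) :=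
  Finset.univ.filter fun v => torusIdx v < n ∨ (k ≤ torusIdx v ∧ torusIdx v ≤ k + n)

theorem mem_torusBag {n k : ℕ} {v : Fin n × Fin n} :
    v ∈ torusBag n k ↔ torusIdx v < n ∨ (k ≤ torusIdx v ∧ torusIdx v ≤ k + n) := by
  simp [torusBag]

theorem card_torusBag (n k : ℕ) : (torusBag n k).card ≤ 2 * n + 1 := by
  have h1 : (torusBag n k).card ≤ (Finset.range n ∪ Finset.Icc k (k + n)).card := by
    apply Finset.card_le_card_of_injOn torusIdx
    · intro v hv
      have := mem_torusBag.1 hv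
      simpa using this
    · exact torusIdx_injective.injOn
  have h2 := Finset.card_union_le (Finset.range n) (Finset.Icc k (k + n))
  simp only [Finset.card_range, Nat.card_Icc] at h2
  omega

/-- The path decomposition of the torus. -/
def torusDecomposition (n m : ℕ) (hm : n * n = m + 1) :
    TreeDecomposition (cycleGraph n □ cycleGraph n) where
  ι := Fin (m + 1)
  fintype_ι := inferInstance
  tree := pathGraph (m + 1)
  isTree := pathGraph_isTree_aux m
  bag k := torusBag n k.val
  covers_edge := by
    intro v w h
    have hv := torusIdx_lt v
    have hw := torusIdx_lt w
    simp only [mem_torusBag]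
    have := torus_adj_cases h
    rcases Nat.lt_or_ge (torusIdx v) n with h1 | h1
    · exact ⟨⟨torusIdx w, by omega⟩, by simp only; omega⟩
    rcases Nat.lt_or_ge (torusIdx w) n with h2 | h2
    · exact ⟨⟨torusIdx v, by omega⟩, by simp only; omega⟩
    rcases le_total (torusIdx v) (torusIdx w) with h3 | h3
    · exact ⟨⟨torusIdx v, by omega⟩, by simp only; omega⟩
    · exact ⟨⟨torusIdx w, by omega⟩, by simp only; omega⟩
  support_connected := by
    intro v
    have hv := torusIdx_lt v
    apply pathGraph_induce_connected_aux (m + 1) _ ⟨torusIdx v, by omega⟩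
    · simp only [Set.mem_setOf_eq, mem_torusBag]
      omega
    · intro x hx y hy
      simp only [Set.mem_setOf_eq, mem_torusBag, Fin.le_def] at *
      omega

/-- The treewidth of the toroidal grid `C_n □ C_n` is at most `2 * n`. -/
theorem treewidth_cycle_boxProd_le (n : ℕ) (hn : 3 ≤ n) :
    treewidth (cycleGraph n □ cycleGraph n) ≤ 2 * n := by
  obtain ⟨m, hm⟩ : ∃ m, n * n = m + 1 :=
    ⟨n * n - 1, by have : 0 < n * n := Nat.mul_pos (by omega) (by omega)
                   omega⟩
  refine le_trans (Nat.sInf_le ⟨torusDecomposition n m hm, rfl⟩) ?_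
  have : (Finset.univ.sup fun x : Fin (m + 1) => (torusBag n x.val).card) ≤ 2 * n + 1 :=
    Finset.sup_le fun x _ => card_torusBag n x.val
  change (Finset.univ.sup fun x : Fin (m + 1) => (torusBag n x.val).card) - 1 ≤ 2 * n
  omega
end

section
/- For all graphs G and H each with at least n vertices such that G and H are 1-connected (i.e., connected with at least 2 vertices), the treewidth of G □ H is at least n − 1. In particular, the n × n planar grid (the cartesian product of two n-vertex paths) has treewidth at least n − 1. -/
open SimpleGraph

namespace TWAux

/-- In a tree rooted at `r`, a connected vertex set `S` has a top at some depth `d`. -/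
lemma exists_top {ι : Type} (T : SimpleGraph ι) (hT : T.IsTree) (r : ι) (S : Set ι)
    (hS : (T.induce S).Connected) :
    ∃ d : ℕ, ∃ t : ι, t ∈ S ∧ ∀ z ∈ S, ∀ p : T.Walk r z, p.IsPath →
      p.getVert d = t ∧ ∀ i, d ≤ i → p.getVert i ∈ S := by
  classical
  obtain ⟨⟨t0, ht0⟩⟩ := hS.nonempty
  obtain ⟨t, htS, hmin⟩ : ∃ t ∈ S, ∀ v ∈ S, T.dist r t ≤ T.dist r v := by
    obtain ⟨t, h1, h2⟩ := WellFounded.has_min (measure (T.dist r)).wf S ⟨t0, ht0⟩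
    exact ⟨t, h1, fun v hv => not_lt.1 (h2 v hv)⟩
  refine ⟨T.dist r t, t, htS, ?_⟩
  intro z hz p hp
  obtain ⟨q, hq, hql⟩ := hT.connected.exists_path_of_dist r t
  obtain ⟨s, hs⟩ := (hS.preconnected ⟨t, htS⟩ ⟨z, hz⟩).exists_isPath
  let s' : T.Walk t z := s.map (Embedding.induce S).toHom
  have hs'path : s'.IsPath := Walk.map_isPath_of_injective Subtype.val_injective hs
  have hs'S : ∀ v ∈ s'.support, v ∈ S := by
    intro v hv
    have hv2 : v ∈ s.support.map (Embedding.induce (G := T) S).toHom := by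
      rw [← Walk.support_map]; exact hv
    obtain ⟨w, _, rfl⟩ := List.mem_map.1 hv2
    exact w.2
  have hqS : ∀ v ∈ q.support, v ∈ S → v = t := by
    intro v hv hvS
    have h1 := hmin v hvS
    have h2 : T.dist r v ≤ (q.takeUntil v hv).length := dist_le _
    have h3 := congrArg Walk.length (q.take_spec hv)
    rw [Walk.length_append] at h3
    have h4 : (q.dropUntil v hv).length = 0 := by omega
    exact Walk.eq_of_length_eq_zero h4
  have hpath : (q.append s').IsPath := by
    rw [Walk.isPath_def, Walk.support_append]
    refine List.Nodup.append hq.support_nodup (hs'path.support_nodup.tail) ?_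
    intro v hv hv'
    have := hqS v hv (hs'S v (List.mem_of_mem_tail hv'))
    subst this
    have hn := hs'path.support_nodup
    rw [Walk.support_eq_cons] at hn
    exact (List.nodup_cons.1 hn).1 hv'
  have hpe : p = q.append s' := congrArg Subtype.val
    (hT.isAcyclic.path_unique ⟨p, hp⟩ ⟨q.append s', hpath⟩)
  have key : ∀ i, T.dist r t ≤ i → p.getVert i = s'.getVert (i - T.dist r t) := by
    intro i hi
    rw [hpe, Walk.getVert_append, hql, if_neg (by omega)]
  refine ⟨?_, ?_⟩
  · rw [key _ le_rfl]; simp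
  · intro i hi
    rw [key i hi]
    exact hs'S _ (Walk.getVert_mem_support _ _)

/-- Helly property of subtrees. -/
lemma helly {ι κ : Type} [Finite κ] [Nonempty κ] (T : SimpleGraph ι) (hT : T.IsTree)
    (S : κ → Set ι) (hS : ∀ k, (T.induce (S k)).Connected)
    (hint : ∀ k l, (S k ∩ S l).Nonempty) : ∃ x, ∀ k, x ∈ S k := by
  obtain ⟨r⟩ := hT.connected.nonempty
  choose d t ht h using fun k => exists_top T hT r (S k) (hS k)
  obtain ⟨k, hk⟩ := Finite.exists_max d
  refine ⟨t k, fun l => ?_⟩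
  obtain ⟨z, hzk, hzl⟩ := hint k l
  obtain ⟨p, hp⟩ := (hT.connected.preconnected r z).exists_isPath
  rw [← (h k z hzk p hp).1]
  exact (h l z hzl p hp).2 _ (hk l)

lemma support_set_connected {V : Type} {G : SimpleGraph V} (D : TreeDecomposition G)
    (C : Set V) (hC : (G.induce C).Connected) :
    (D.tree.induce {x | ∃ v ∈ C, v ∈ D.bag x}).Connected := by
  set U : Set D.ι := {x | ∃ v ∈ C, v ∈ D.bag x} with hU
  have hsame : ∀ v (hv : v ∈ C) x y (hx : v ∈ D.bag x) (hy : v ∈ D.bag y),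
      (D.tree.induce U).Reachable ⟨x, v, hv, hx⟩ ⟨y, v, hv, hy⟩ := by
    intro v hv x y hx hy
    have h := (D.support_connected v).preconnected ⟨x, hx⟩ ⟨y, hy⟩
    have hsub : {x | v ∈ D.bag x} ⊆ U := fun x hx => ⟨v, hv, hx⟩
    exact h.map (induceHomOfLE D.tree hsub).toHom
  have hwalk : ∀ (u v : C) (_ : (G.induce C).Walk u v) x y (hx : u.1 ∈ D.bag x)
      (hy : v.1 ∈ D.bag y),
      (D.tree.induce U).Reachable ⟨x, u.1, u.2, hx⟩ ⟨y, v.1, v.2, hy⟩ := by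
    intro u v p
    induction p with
    | nil => intro x y hx hy; exact hsame _ (Subtype.prop _) x y hx hy
    | @cons a b c hab p ih =>
      intro x y hx hy
      obtain ⟨z, hza, hzb⟩ := D.covers_edge hab
      exact (hsame a.1 a.2 x z hx hza).trans (ih z y hzb hy)
  obtain ⟨⟨v0, hv0⟩⟩ := hC.nonempty
  obtain ⟨⟨x0, hx0⟩⟩ := (D.support_connected v0).nonempty
  have : Nonempty U := ⟨⟨x0, v0, hv0, hx0⟩⟩
  refine Connected.mk ?_
  rintro ⟨x, u, hu, hx⟩ ⟨y, v, hv, hy⟩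
  obtain ⟨p⟩ := hC.preconnected ⟨u, hu⟩ ⟨v, hv⟩
  exact hwalk _ _ p x y hx hy

def cross {α β : Type} (k : α × β) : Set (α × β) := {p | p.1 = k.1 ∨ p.2 = k.2}

lemma cross_connected {α β : Type} {G : SimpleGraph α} {H : SimpleGraph β}
    (hG : G.Connected) (hH : H.Connected) (k : α × β) :
    ((G □ H).induce (cross k)).Connected := by
  obtain ⟨a, b⟩ := k
  let f : G →g (G □ H).induce (cross (a, b)) :=
    ⟨fun x => ⟨(x, b), Or.inr rfl⟩, fun {x y} h => by simp [boxProd_adj, h]⟩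
  let g : H →g (G □ H).induce (cross (a, b)) :=
    ⟨fun y => ⟨(a, y), Or.inl rfl⟩, fun {x y} h => by simp [boxProd_adj, h]⟩
  have key : ∀ p : cross (a, b), ((G □ H).induce (cross (a, b))).Reachable p
      ⟨(a, b), Or.inl rfl⟩ := by
    rintro ⟨⟨x, y⟩, h | h⟩
    · obtain rfl : x = a := h
      exact (hH.preconnected y b).map g
    · obtain rfl : y = b := h
      exact (hG.preconnected x a).map f
  have : Nonempty (cross (a, b)) := ⟨⟨(a, b), Or.inl rfl⟩⟩
  exact Connected.mk fun p q => (key p).trans (key q).symm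

lemma exists_bag {α β : Type} [Fintype α] [Fintype β] {G : SimpleGraph α} {H : SimpleGraph β}
    (hG : G.Connected) (hH : H.Connected) (n : ℕ) (hα : n ≤ Fintype.card α)
    (hβ : n ≤ Fintype.card β) (D : TreeDecomposition (G □ H)) :
    ∃ x, n ≤ (D.bag x).card := by
  classical
  have := hG.nonempty
  have := hH.nonempty
  obtain ⟨x, hx⟩ := helly (κ := α × β) D.tree D.isTree
    (fun k => {x | ∃ v ∈ cross k, v ∈ D.bag x})
    (fun k => support_set_connected D _ (cross_connected hG hH k)) (by
      intro k l
      obtain ⟨⟨x, hx⟩⟩ := (D.support_connected (k.1, l.2)).nonempty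
      exact ⟨x, ⟨(k.1, l.2), Or.inl rfl, hx⟩, ⟨(k.1, l.2), Or.inr rfl, hx⟩⟩)
  refine ⟨x, ?_⟩
  by_contra! hlt
  have h1 : ∃ a, a ∉ (D.bag x).image Prod.fst := by
    by_contra! h
    have h2 := Finset.card_image_le (s := D.bag x) (f := Prod.fst)
    rw [Finset.eq_univ_iff_forall.2 h, Finset.card_univ] at h2
    omega
  have h2 : ∃ b, b ∉ (D.bag x).image Prod.snd := by
    by_contra! h
    have h2 := Finset.card_image_le (s := D.bag x) (f := Prod.snd)
    rw [Finset.eq_univ_iff_forall.2 h, Finset.card_univ] at h2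
    omega
  obtain ⟨a, ha⟩ := h1
  obtain ⟨b, hb⟩ := h2
  obtain ⟨v, hv, hvx⟩ := hx (a, b)
  rcases hv with h | h
  · exact ha (Finset.mem_image.2 ⟨v, hvx, h⟩)
  · exact hb (Finset.mem_image.2 ⟨v, hvx, h⟩)

/-- The decomposition with a single bag. -/
def trivialDecomp {V : Type} [Fintype V] (G : SimpleGraph V) : TreeDecomposition G where
  ι := Unit
  fintype_ι := inferInstance
  tree := ⊥
  isTree := IsTree.of_subsingleton
  bag := fun _ => Finset.univ
  covers_edge := fun v w _ => ⟨(), by simp, by simp⟩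
  support_connected := fun v => by
    have : Nonempty {x : Unit | v ∈ (Finset.univ : Finset V)} := ⟨⟨(), by simp⟩⟩
    exact Connected.mk fun x y => by rw [Subsingleton.elim x y]

lemma core {α β : Type} [Fintype α] [Fintype β] {G : SimpleGraph α} {H : SimpleGraph β}
    (hG : G.Connected) (hH : H.Connected) (n : ℕ) (hα : n ≤ Fintype.card α)
    (hβ : n ≤ Fintype.card β) : n - 1 ≤ treewidth (G □ H) := by
  refine le_csInf ⟨_, trivialDecomp _, rfl⟩ ?_
  rintro w ⟨D, rfl⟩
  obtain ⟨x, hx⟩ := exists_bag hG hH n hα hβ D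
  let _ := D.fintype_ι
  have h := Finset.le_sup (f := fun x : D.ι => (D.bag x).card) (Finset.mem_univ x)
  exact Nat.sub_le_sub_right (hx.trans h) 1

lemma connected_of_isKConnected {α : Type} [Fintype α] {G : SimpleGraph α}
    (h : IsKConnected 1 G) : G.Connected := by
  have h1 := h.2 ∅ (by simp)
  rw [Finset.coe_empty, Subgraph.deleteVerts_empty] at h1
  exact (Subgraph.topIso.connected_iff).1 h1.coe

end TWAux

/-- For all `1`-connected graphs `G` and `H` (i.e. connected graphs with at least
two vertices) each with at least `n` vertices, the treewidth of `G □ H` is at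
least `n - 1`. In particular, the `n × n` planar grid (the cartesian product of
two `n`-vertex paths) has treewidth at least `n - 1`. -/
theorem treewidth_boxProd_connected_ge (n : ℕ) :
    (∀ (α β : Type) [Fintype α] [Fintype β] (G : SimpleGraph α) (H : SimpleGraph β),
      IsKConnected 1 G → IsKConnected 1 H →
      n ≤ Fintype.card α → n ≤ Fintype.card β →
      n - 1 ≤ treewidth (G □ H)) ∧
    n - 1 ≤ treewidth (pathGraph n □ pathGraph n) := by
  refine ⟨?_, ?_⟩
  · intro α β _ _ G H hG hH hα hβ
    exact TWAux.core (TWAux.connected_of_isKConnected hG)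
      (TWAux.connected_of_isKConnected hH) n hα hβ
  · cases n with
    | zero => simp
    | succ m =>
      exact TWAux.core (pathGraph_connected m) (pathGraph_connected m) (m + 1)
        (by simp) (by simp)
end
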